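/- Let E be a real Banach space, P ⊆ E a cone, and (X, p) a double controlled cone metric space with respect to functions α, β : X × X → [1,∞). Suppose T : X → X satisfies p(Tx, Ty) ≼ a·p(x, Tx) + b·p(y, Ty) + c·p(x, y) for all x, y ∈ X, where a, b, c ∈ [0,1) and a + b + c < 1. Fix x₀ ∈ X and set x_n = Tⁿx₀. Then p(x_n, x_{n+1}) ≼ ((a+c)/(1−b))ⁿ · p(x₀, x₁) for all n ≥ 0. -/

import Mathlib

open Filter Topology Set

variable {E : Type*} [NormedAddCommGroup E] [NormedSpace ℝ E] [CompleteSpace E]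
variable {X : Type*}

/-- A subset `P` of a real Banach space is a cone. -/
def IsConeSet (P : Set E) : Prop :=
  IsClosed P ∧ P.Nonempty ∧ P ≠ {0} ∧
    (∀ x ∈ P, ∀ y ∈ P, ∀ a b : ℝ, 0 ≤ a → 0 ≤ b → a • x + b • y ∈ P) ∧
    P ∩ (-P) = {0}

/-- The partial order induced by the cone `P`: `x ≼ y` iff `y - x ∈ P`. -/
def coneLE (P : Set E) (x y : E) : Prop := y - x ∈ P

/-- The strict relation induced by the cone `P`: `x ≪ y` iff `y - x ∈ int P`. -/
def coneLT (P : Set E) (x y : E) : Prop := y - x ∈ interior P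

/-- `P` is a normal cone with normal constant `M`. -/
def IsNormalCone (P : Set E) (M : ℝ) : Prop :=
  0 < M ∧ ∀ x y : E, coneLE P 0 x → coneLE P x y → ‖x‖ ≤ M * ‖y‖

/-- `p` is a double controlled cone metric on `X` with respect to the control
functions `α, β : X × X → [1,∞)`, relative to the cone `P`. -/
def IsDCCM (P : Set E) (α β : X → X → ℝ) (p : X → X → E) : Prop :=
  (∀ x y : X, 1 ≤ α x y) ∧ (∀ x y : X, 1 ≤ β x y) ∧
  (∀ x y : X, coneLE P 0 (p x y)) ∧ (∀ x y : X, p x y = 0 ↔ x = y) ∧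
  (∀ x y : X, p x y = p y x) ∧
  (∀ x y z : X, coneLE P (p x y) (α x z • p x z + β z y • p z y))

/-- Convergence of a sequence in a double controlled cone metric space. -/
def DCCMConv (P : Set E) (p : X → X → E) (s : ℕ → X) (x : X) : Prop :=
  ∀ c : E, coneLT P 0 c → ∃ N : ℕ, ∀ n > N, coneLT P (p (s n) x) c

/-- Cauchy sequences in a double controlled cone metric space. -/
def DCCMCauchy (P : Set E) (p : X → X → E) (s : ℕ → X) : Prop :=
  ∀ c : E, coneLT P 0 c → ∃ N : ℕ, ∀ m > N, ∀ n > N, coneLT P (p (s m) (s n)) c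

/-- Completeness of a double controlled cone metric space. -/
def DCCMComplete (P : Set E) (p : X → X → E) : Prop :=
  ∀ s : ℕ → X, DCCMCauchy P p s → ∃ x : X, DCCMConv P p s x

/-!
Evaluating the Reich inequality at `y = T x` only involves `u = p(x, Tx)` and `v = p(Tx, T²x)`:
it reads `v ≼ (a + c) u + b v`. Since `b < 1`, the term `b v` can be absorbed into the left-hand
side, so that `T` shrinks consecutive distances by the factor `(a + c) / (1 - b)`, and iterating
gives the geometric bound.
-/

section OrderedModule

variable {𝕜 M Y : Type*}

lemma le_pow_smul_of_succ_le_smul [MonoidWithZero 𝕜] [Preorder 𝕜] [Preorder M] [MulAction 𝕜 M]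
    [PosSMulMono 𝕜 M] {k : 𝕜} (hk : 0 ≤ k) {u : ℕ → M} (hu : ∀ n, u (n + 1) ≤ k • u n) (n : ℕ) :
    u n ≤ k ^ n • u 0 := by
  refine (monotone_smul_left_of_nonneg hk).seq_le_seq (y := fun m ↦ k ^ m • u 0) n ?_
    (fun m _ ↦ hu m) (fun m _ ↦ ?_)
  · rw [pow_zero, one_smul]
  · rw [pow_succ', mul_smul]

variable [Field 𝕜] [LinearOrder 𝕜] [IsStrictOrderedRing 𝕜]
  [AddCommGroup M] [Preorder M] [IsOrderedAddMonoid M] [Module 𝕜 M] [PosSMulMono 𝕜 M]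

lemma le_div_smul_of_le_smul_add_smul {r b : 𝕜} (hb : b < 1) {u v : M}
    (h : v ≤ r • u + b • v) : v ≤ (r / (1 - b)) • u := by
  have absorbed : (1 - b) • v ≤ r • u := by rwa [sub_smul, one_smul, sub_le_iff_le_add]
  calc
    v = (1 - b)⁻¹ • (1 - b) • v := (inv_smul_smul₀ (sub_pos.2 hb).ne' v).symm
    _ ≤ (1 - b)⁻¹ • r • u :=
      smul_le_smul_of_nonneg_left absorbed (inv_nonneg.2 (sub_nonneg.2 hb.le))
    _ = (r / (1 - b)) • u := by rw [smul_smul, div_eq_inv_mul]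

theorem picard_iterates_reich_general {p : Y → Y → M} {T : Y → Y} {a b c : 𝕜}
    (hac : 0 ≤ a + c) (hb : b < 1)
    (hT : ∀ x, p (T x) (T (T x)) ≤ a • p x (T x) + b • p (T x) (T (T x)) + c • p x (T x))
    (x : Y) (n : ℕ) :
    p (T^[n] x) (T^[n + 1] x) ≤ ((a + c) / (1 - b)) ^ n • p x (T x) := by
  have contraction (y : Y) : p (T y) (T (T y)) ≤ ((a + c) / (1 - b)) • p y (T y) := by
    refine le_div_smul_of_le_smul_add_smul hb ?_
    rw [add_smul, add_right_comm]
    exact hT y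
  refine le_pow_smul_of_succ_le_smul (u := fun m ↦ p (T^[m] x) (T^[m + 1] x))
    (div_nonneg hac (sub_nonneg.2 hb.le)) (fun m ↦ ?_) n
  simpa only [Function.iterate_succ_apply'] using contraction (T^[m] x)

end OrderedModule

namespace IsConeSet

variable {F : Type*} [NormedAddCommGroup F] [NormedSpace ℝ F] {P : Set F}

/-- A cone `P` as a bundled pointed cone, giving access to the order theory of Mathlib. -/
def toPointedCone (hP : IsConeSet P) : PointedCone ℝ F :=
  .ofConeComb P hP.2.1 fun x hx y hy a ha b hb ↦ hP.2.2.2.1 x hx y hy a b ha hb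

lemma salient_toPointedCone (hP : IsConeSet P) : hP.toPointedCone.toConvexCone.Salient :=
  hP.toPointedCone.salient_iff_inter_neg_eq_singleton.2 hP.2.2.2.2

/-- The partial order `≼` induced by a cone `P`, chosen so that `x ≤ y` unfolds to
`coneLE P x y`. -/
abbrev partialOrder (hP : IsConeSet P) : PartialOrder F :=
  hP.toPointedCone.toConvexCone.toPartialOrder hP.toPointedCone.pointed_toConvexCone
    hP.salient_toPointedCone

lemma isOrderedAddMonoid (hP : IsConeSet P) :
    letI := hP.partialOrder
    IsOrderedAddMonoid F :=
  hP.toPointedCone.toConvexCone.to_isOrderedAddMonoid _ _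

lemma isOrderedModule (hP : IsConeSet P) :
    letI := hP.partialOrder
    IsOrderedModule ℝ F :=
  letI := hP.partialOrder
  haveI := hP.isOrderedAddMonoid
  hP.toPointedCone.to_isOrderedModule fun _ _ ↦ Iff.rfl

end IsConeSet

/-- For a Reich-type contraction, the Picard iterates satisfy
`p(xₙ, xₙ₊₁) ≼ ((a+c)/(1-b))ⁿ • p(x₀, x₁)`. -/
theorem picard_iterates_reich
    [Nonempty X] (P : Set E) (hP : IsConeSet P)
    (α β : X → X → ℝ) (p : X → X → E) (hp : IsDCCM P α β p)
    (T : X → X) (a b c : ℝ) (ha0 : 0 ≤ a) (ha1 : a < 1) (hb0 : 0 ≤ b) (hb1 : b < 1)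
    (hc0 : 0 ≤ c) (hc1 : c < 1) (habc : a + b + c < 1)
    (hT : ∀ x y : X, coneLE P (p (T x) (T y))
      (a • p x (T x) + b • p y (T y) + c • p x y))
    (x0 : X) (xs : ℕ → X) (hxs : ∀ n, xs n = T^[n] x0) :
    ∀ n : ℕ, coneLE P (p (xs n) (xs (n + 1)))
      (((a + c) / (1 - b)) ^ n • p (xs 0) (xs 1)) := by
  obtain rfl : xs = fun n ↦ T^[n] x0 := funext hxs
  let := hP.partialOrder
  have := hP.isOrderedAddMonoid
  have := hP.isOrderedModule
  exact picard_iterates_reich_general (p := p) (add_nonneg ha0 hc0) hb1 (fun x ↦ hT x (T x)) x0
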